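/- Fix constants 0 < δ ≤ Δ and α ∈ (−1/2, 1). For every Alice value density v_A there exists a deterministic Alice strategy S_A for the repeated 2-cut game (depending on α but not on the constant c below) such that: for every c > 0 there exist C > 0 and T₀ ∈ ℕ with the property that for every Bob value density v_B, every deterministic Bob strategy that guarantees regret at most c·T'^α for every horizon T', and every horizon T ≥ T₀, Alice's Stackelberg regret under S_A over horizon T is at most C·T^{(2+α)/3}·(log T)^{2/3}. -/

import Mathlib

open MeasureTheory Set

noncomputable section

attribute [local instance] Classical.propDecidable

/-- A value density: measurable, bounded in `[δ, Δ]` on `[0,1]`, integrating to 1 on `[0,1]`. -/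
def IsValueDensity (δ Δ : ℝ) (v : ℝ → ℝ) : Prop :=
  Measurable v ∧ (∀ x ∈ Set.Icc (0:ℝ) 1, v x ∈ Set.Icc δ Δ) ∧
    (∫ x in Set.Icc (0:ℝ) 1, v x) = 1

/-- The value of a piece `S` under density `v`. -/
def pieceVal (v : ℝ → ℝ) (S : Set ℝ) : ℝ := ∫ x in S, v x

/-- Extended cut points: `0, c 0, …, c (k-1), 1`. -/
def extCuts (k : ℕ) (c : Fin k → ℝ) : ℕ → ℝ := fun i =>
  if i = 0 then 0 else if h : i - 1 < k then c ⟨i - 1, h⟩ else 1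

/-- A valid vector of `k` cut points: nondecreasing, within `[0,1]`. -/
def ValidCuts (k : ℕ) (c : Fin k → ℝ) : Prop :=
  Monotone c ∧ ∀ i, c i ∈ Set.Icc (0:ℝ) 1

/-- The two pieces of the alternating partition induced by cuts `c`:
`true` gives the union of even-indexed intervals, `false` the odd-indexed ones. -/
def altPiece (k : ℕ) (c : Fin k → ℝ) (b : Bool) : Set ℝ :=
  ⋃ i ∈ Finset.range (k + 1),
    if decide (i % 2 = 0) = b then Set.Icc (extCuts k c i) (extCuts k c (i + 1)) else ∅

/-- Alice's Stackelberg value with `k` cuts: max of `V_A(Z_A)` over alternating partitions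
`(Z_A, Z_B)` induced by `k` cut points with `V_B(Z_B) ≥ 1/2`. -/
def stackelbergValue (k : ℕ) (vA vB : ℝ → ℝ) : ℝ :=
  sSup { u : ℝ | ∃ (c : Fin k → ℝ) (b : Bool), ValidCuts k c ∧
    1 / 2 ≤ pieceVal vB (altPiece k c (!b)) ∧ u = pieceVal vA (altPiece k c b) }

/-- A history of play: the list of (Alice's cuts, Bob's choice) in past rounds. -/
abbrev Hist (k : ℕ) := List ((Fin k → ℝ) × Bool)

/-- Alice's deterministic strategy: horizon and history ↦ next cut vector. -/
abbrev AliceStrategy (k : ℕ) := ℕ → Hist k → (Fin k → ℝ)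

/-- Bob's deterministic strategy: horizon, history, and Alice's current cuts ↦ choice. -/
abbrev BobStrategy (k : ℕ) := ℕ → Hist k → (Fin k → ℝ) → Bool

/-- The history of play after `t` rounds. -/
def playHist (k : ℕ) (SA : AliceStrategy k) (SB : BobStrategy k) (T : ℕ) : ℕ → Hist k
  | 0 => []
  | t + 1 =>
      let h := playHist k SA SB T t
      let cuts := SA T h
      h ++ [(cuts, SB T h cuts)]

/-- Alice's cuts in round `t` (0-indexed). -/
def roundCuts (k : ℕ) (SA : AliceStrategy k) (SB : BobStrategy k) (T t : ℕ) : Fin k → ℝ :=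
  SA T (playHist k SA SB T t)

/-- Bob's choice in round `t` (0-indexed). -/
def roundChoice (k : ℕ) (SA : AliceStrategy k) (SB : BobStrategy k) (T t : ℕ) : Bool :=
  SB T (playHist k SA SB T t) (roundCuts k SA SB T t)

/-- Alice's Stackelberg regret over horizon `T`: in each round she receives the value of
the piece Bob did not choose. -/
def aliceRegret (k : ℕ) (vA vB : ℝ → ℝ) (SA : AliceStrategy k) (SB : BobStrategy k)
    (T : ℕ) : ℝ :=
  ∑ t ∈ Finset.range T,
    (stackelbergValue k vA vB -
      pieceVal vA (altPiece k (roundCuts k SA SB T t) (!(roundChoice k SA SB T t))))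

/-- Bob's regret over horizon `T` relative to always choosing his preferred piece. -/
def bobRegret (k : ℕ) (vB : ℝ → ℝ) (SA : AliceStrategy k) (SB : BobStrategy k) (T : ℕ) : ℝ :=
  ∑ t ∈ Finset.range T,
    (max (pieceVal vB (altPiece k (roundCuts k SA SB T t) true))
        (pieceVal vB (altPiece k (roundCuts k SA SB T t) false)) -
      pieceVal vB (altPiece k (roundCuts k SA SB T t) (roundChoice k SA SB T t)))

/-- Bob's strategy guarantees regret at most `R T` against every Alice strategy and horizon. -/
def BobGuarantees (k : ℕ) (vB : ℝ → ℝ) (SB : BobStrategy k) (R : ℕ → ℝ) : Prop :=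
  ∀ (SA : AliceStrategy k) (T : ℕ), bobRegret k vB SA SB T ≤ R T

/-- The myopic Bob: chooses the piece of larger `V_B`-value, breaking ties towards
the piece of smaller `V_A`-value. -/
def myopicBob (k : ℕ) (vA vB : ℝ → ℝ) : BobStrategy k := fun _ _ c =>
  if pieceVal vB (altPiece k c false) < pieceVal vB (altPiece k c true) then true
  else if pieceVal vB (altPiece k c true) < pieceVal vB (altPiece k c false) then false
  else if pieceVal vA (altPiece k c true) ≤ pieceVal vA (altPiece k c false) then true
  else false

/-- Alice's strategy always produces valid cut vectors. -/
def AliceValid (k : ℕ) (SA : AliceStrategy k) : Prop := ∀ T h, ValidCuts k (SA T h)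

/-!
Alice traces a staircase of grid cuts of mesh `h` along the curve of cuts that halve the cake for
Bob. Once Bob has taken a piece more than `M` times at the same cuts, his regret bound forces it to
be worth almost half the cake to him; Alice then shrinks it by moving one cut by `h`, and remembers
the best outcome for herself among the enlarged pieces that Bob would certainly want to take. The
two cuts move right only, so this ends after `O(1 / h)` moves, that is, after `O(M / h)` rounds. The
staircase then passes within `O(h)` of her Stackelberg cuts, and the densities being bounded above
and below, her best offer loses only `O(h)`. In the remaining rounds she repeats it, and Bob
can refuse it only at a cost of order `h`, hence at most `O(R / h)` times if his regret is at most
`R = c * T ^ α`. The total `M / h + h * T + R / h` is balanced by `h = T ^ (-(1 - α) / 3)` with `M`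
slightly larger than `T ^ α / h`: the unknown `c` is absorbed by any factor tending to infinity.
-/

/-! ### Cumulative value -/

/-- The value of `[0, x] ∩ [0, 1]`. Since the density is cut off outside the cake, this function
is monotone and Lipschitz on all of `ℝ`, and positions outside the cake need no special care. -/
def cumVal (v : ℝ → ℝ) (x : ℝ) : ℝ := ∫ y in (0 : ℝ)..x, (Icc 0 1).indicator v y

namespace IsValueDensity

variable {δ Δ : ℝ} {v vA vB : ℝ → ℝ} {x y h : ℝ}

theorem lower_le_upper (hv : IsValueDensity δ Δ v) : δ ≤ Δ :=
  have hv₀ := hv.2.1 0 (by simp)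
  hv₀.1.trans hv₀.2

theorem integrable_indicator (hv : IsValueDensity δ Δ v) : Integrable ((Icc 0 1).indicator v) := by
  rw [integrable_indicator_iff measurableSet_Icc]
  refine Measure.integrableOn_of_bounded (M := max |δ| |Δ|) (by simp)
    hv.1.aestronglyMeasurable ?_
  filter_upwards [ae_restrict_mem measurableSet_Icc] with z hz
  exact abs_le_max_abs_abs (hv.2.1 z hz).1 (hv.2.1 z hz).2

theorem intervalIntegrable_indicator (hv : IsValueDensity δ Δ v) (x y : ℝ) :
    IntervalIntegrable ((Icc 0 1).indicator v) volume x y :=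
  hv.integrable_indicator.intervalIntegrable

theorem cumVal_sub_cumVal (hv : IsValueDensity δ Δ v) (x y : ℝ) :
    cumVal v y - cumVal v x = ∫ z in x..y, (Icc 0 1).indicator v z :=
  intervalIntegral.integral_interval_sub_left (hv.intervalIntegrable_indicator 0 y)
    (hv.intervalIntegrable_indicator 0 x)

theorem cumVal_mono (hδ : 0 ≤ δ) (hv : IsValueDensity δ Δ v) : Monotone (cumVal v) := by
  intro x y hxy
  rw [← sub_nonneg, hv.cumVal_sub_cumVal]
  exact intervalIntegral.integral_nonneg hxy fun z _ ↦
    indicator_nonneg (fun z hz ↦ hδ.trans (hv.2.1 z hz).1) z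

theorem cumVal_sub_le (hδ : 0 ≤ δ) (hv : IsValueDensity δ Δ v) (hxy : x ≤ y) :
    cumVal v y - cumVal v x ≤ Δ * (y - x) := by
  have hle : ∀ z, (Icc 0 1).indicator v z ≤ Δ :=
    indicator_le' (fun z hz ↦ (hv.2.1 z hz).2) fun _ _ ↦ hδ.trans hv.lower_le_upper
  rw [hv.cumVal_sub_cumVal]
  calc ∫ z in x..y, (Icc 0 1).indicator v z ≤ ∫ _ in x..y, Δ :=
        intervalIntegral.integral_mono_on hxy (hv.intervalIntegrable_indicator x y) (by simp)
          fun z _ ↦ hle z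
    _ = Δ * (y - x) := by simp [mul_comm]

theorem le_cumVal_sub (hv : IsValueDensity δ Δ v) (hx : 0 ≤ x) (hxy : x ≤ y) (hy : y ≤ 1) :
    δ * (y - x) ≤ cumVal v y - cumVal v x := by
  have hle : ∀ z ∈ Icc x y, δ ≤ (Icc 0 1).indicator v z := fun z hz ↦ by
    have hz' : z ∈ Icc (0 : ℝ) 1 := Icc_subset_Icc hx hy hz
    rw [indicator_of_mem hz']
    exact (hv.2.1 z hz').1
  rw [hv.cumVal_sub_cumVal]
  calc δ * (y - x) = ∫ _ in x..y, δ := by simp [mul_comm]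
    _ ≤ ∫ z in x..y, (Icc 0 1).indicator v z :=
        intervalIntegral.integral_mono_on hxy (by simp) (hv.intervalIntegrable_indicator x y) hle

theorem cumVal_sub_le_cumVal_sub (hδ : 0 ≤ δ) (hA : IsValueDensity δ Δ vA)
    (hB : IsValueDensity δ Δ vB) (hxy : x ≤ y) :
    δ * (cumVal vA y - cumVal vA x) ≤ Δ * (cumVal vB y - cumVal vB x) := by
  rw [hA.cumVal_sub_cumVal, hB.cumVal_sub_cumVal, ← intervalIntegral.integral_const_mul,
    ← intervalIntegral.integral_const_mul]
  refine intervalIntegral.integral_mono_on hxy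
    ((hA.intervalIntegrable_indicator x y).const_mul δ)
    ((hB.intervalIntegrable_indicator x y).const_mul Δ) fun z _ ↦ ?_
  by_cases hz : z ∈ Icc (0 : ℝ) 1
  · rw [indicator_of_mem hz, indicator_of_mem hz]
    calc δ * vA z ≤ δ * Δ := mul_le_mul_of_nonneg_left (hA.2.1 z hz).2 hδ
      _ = Δ * δ := mul_comm δ Δ
      _ ≤ Δ * vB z := mul_le_mul_of_nonneg_left (hB.2.1 z hz).1 (hδ.trans hA.lower_le_upper)
  · simp [hz]

theorem cumVal_le_add_of_cumVal_le_add (hδ : 0 < δ) (hA : IsValueDensity δ Δ vA)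
    (hB : IsValueDensity δ Δ vB) (hh : 0 ≤ h) (hxy : cumVal vB y ≤ cumVal vB x + δ * h) :
    cumVal vA y ≤ cumVal vA x + Δ * h := by
  have hΔ : 0 ≤ Δ := hδ.le.trans hA.lower_le_upper
  rcases le_total y x with hle | hle
  · linarith [hA.cumVal_mono hδ.le hle, mul_nonneg hΔ hh]
  · refine le_of_mul_le_mul_left ?_ hδ
    calc δ * cumVal vA y
        ≤ δ * cumVal vA x + Δ * (cumVal vB y - cumVal vB x) := by
          linarith [hA.cumVal_sub_le_cumVal_sub hδ.le hB hle]
      _ ≤ δ * cumVal vA x + Δ * (δ * h) := by gcongr; linarith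
      _ = δ * (cumVal vA x + Δ * h) := by ring

theorem pieceVal_Icc (hv : IsValueDensity δ Δ v) (hx : 0 ≤ x) (hxy : x ≤ y) (hy : y ≤ 1) :
    pieceVal v (Icc x y) = cumVal v y - cumVal v x := by
  rw [hv.cumVal_sub_cumVal, intervalIntegral.integral_of_le hxy, ← integral_Icc_eq_integral_Ioc]
  exact (setIntegral_congr_fun measurableSet_Icc fun z hz ↦
    indicator_of_mem (Icc_subset_Icc hx hy hz) v).symm

end IsValueDensity

theorem cumVal_zero (v : ℝ → ℝ) : cumVal v 0 = 0 := intervalIntegral.integral_same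

theorem cumVal_of_nonpos (v : ℝ → ℝ) {x : ℝ} (hx : x ≤ 0) : cumVal v x = 0 := by
  refine intervalIntegral.integral_zero_ae ?_
  filter_upwards [Measure.ae_ne volume 0] with z hz hzx
  rw [uIoc_of_ge hx] at hzx
  exact indicator_of_notMem (fun hz' ↦ hz (le_antisymm hzx.2 hz'.1)) v

namespace IsValueDensity

variable {δ Δ : ℝ} {v vA vB : ℝ → ℝ} {x y h : ℝ}

theorem cumVal_one (hv : IsValueDensity δ Δ v) : cumVal v 1 = 1 := by
  have := hv.pieceVal_Icc le_rfl zero_le_one le_rfl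
  rw [cumVal_zero, sub_zero] at this
  exact this.symm.trans hv.2.2

theorem cumVal_of_one_le (hv : IsValueDensity δ Δ v) (hx : 1 ≤ x) : cumVal v x = 1 := by
  have hzero : ∫ z in (1 : ℝ)..x, (Icc 0 1).indicator v z = 0 := by
    refine intervalIntegral.integral_zero_ae (Filter.Eventually.of_forall fun z hz ↦ ?_)
    rw [uIoc_of_le hx] at hz
    exact indicator_of_notMem (fun hz' ↦ hz.1.not_ge hz'.2) v
  linarith [hv.cumVal_sub_cumVal 1 x, hv.cumVal_one]

theorem cumVal_nonneg (hδ : 0 ≤ δ) (hv : IsValueDensity δ Δ v) (x : ℝ) : 0 ≤ cumVal v x := by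
  rw [← cumVal_of_nonpos v (min_le_right x 0)]
  exact hv.cumVal_mono hδ (min_le_left x 0)

theorem cumVal_le_one (hδ : 0 ≤ δ) (hv : IsValueDensity δ Δ v) (x : ℝ) : cumVal v x ≤ 1 := by
  rw [← hv.cumVal_of_one_le (le_max_right x 1)]
  exact hv.cumVal_mono hδ (le_max_left x 1)

theorem lower_le_one (hv : IsValueDensity δ Δ v) : δ ≤ 1 := by
  have := hv.le_cumVal_sub le_rfl zero_le_one le_rfl
  rw [hv.cumVal_one, cumVal_zero] at this
  linarith

theorem cumVal_projIcc (hv : IsValueDensity δ Δ v) (x : ℝ) :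
    cumVal v (projIcc 0 1 zero_le_one x) = cumVal v x := by
  rcases le_total x 0 with hx₀ | hx₀
  · rw [projIcc_of_le_left _ hx₀, cumVal_zero, cumVal_of_nonpos v hx₀]
  rcases le_total 1 x with hx₁ | hx₁
  · rw [projIcc_of_right_le _ hx₁, hv.cumVal_one, hv.cumVal_of_one_le hx₁]
  · rw [projIcc_of_mem _ ⟨hx₀, hx₁⟩]

theorem cumVal_sub_le_max (hv : IsValueDensity δ Δ v) (hh : 0 ≤ h) (hx : x ≤ 1) :
    cumVal v (x - h) ≤ max 0 (cumVal v x - δ * h) := by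
  rcases le_total h x with hhx | hhx
  · refine le_max_of_le_right ?_
    linarith [hv.le_cumVal_sub (sub_nonneg.mpr hhx) (sub_le_self x hh) hx]
  · exact le_max_of_le_left (cumVal_of_nonpos v (sub_nonpos.mpr hhx)).le

theorem min_le_cumVal_add (hv : IsValueDensity δ Δ v) (hh : 0 ≤ h) (hx : 0 ≤ x) :
    min 1 (cumVal v x + δ * h) ≤ cumVal v (x + h) := by
  rcases le_total (x + h) 1 with hxh | hxh
  · refine min_le_of_right_le ?_
    linarith [hv.le_cumVal_sub hx (le_add_of_nonneg_right hh) hxh]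
  · exact min_le_of_left_le (hv.cumVal_of_one_le hxh).ge

end IsValueDensity

/-! ### Two cuts -/

/-- The two cut points at `p.1` and `p.2`, moved into the cake and, if necessary, merged so as to
be in increasing order. -/
def cutsAt (p : ℝ × ℝ) : Fin 2 → ℝ :=
  ![projIcc 0 1 zero_le_one p.1, projIcc 0 1 zero_le_one (max p.1 p.2)]

/-- The value of piece `b` (`false` is the middle piece, `true` the outer one) when the cake is
cut at `p`. -/
def share (v : ℝ → ℝ) (p : ℝ × ℝ) (b : Bool) : ℝ := pieceVal v (altPiece 2 (cutsAt p) b)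

theorem validCuts_cutsAt (p : ℝ × ℝ) : ValidCuts 2 (cutsAt p) := by
  refine ⟨?_, ?_⟩
  · rw [Fin.monotone_iff_le_succ]
    intro i
    fin_cases i
    exact monotone_projIcc _ (le_max_left p.1 p.2)
  · intro i
    fin_cases i <;> exact Subtype.property _

theorem ValidCuts.cutsAt_eq {c : Fin 2 → ℝ} (hc : ValidCuts 2 c) : cutsAt (c 0, c 1) = c := by
  have hle : c 0 ≤ c 1 := hc.1 (Fin.zero_le 1)
  ext i
  fin_cases i
  · simp [cutsAt, projIcc_of_mem _ (hc.2 0)]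
  · simp [cutsAt, max_eq_right hle, projIcc_of_mem _ (hc.2 1)]

theorem altPiece_two_false (c : Fin 2 → ℝ) : altPiece 2 c false = Icc (c 0) (c 1) := by
  simp [altPiece, extCuts, Finset.range_add_one]

theorem altPiece_two_true (c : Fin 2 → ℝ) :
    altPiece 2 c true = Icc 0 (c 0) ∪ Icc (c 1) 1 := by
  simp [altPiece, extCuts, Finset.range_add_one, union_comm]

namespace IsValueDensity

variable {δ Δ : ℝ} {v : ℝ → ℝ} {x y x' y' h : ℝ}

theorem share_false (hδ : 0 ≤ δ) (hv : IsValueDensity δ Δ v) (p : ℝ × ℝ) :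
    share v p false = max 0 (cumVal v p.2 - cumVal v p.1) := by
  have hc := validCuts_cutsAt p
  rw [share, altPiece_two_false, hv.pieceVal_Icc (hc.2 0).1 (hc.1 (Fin.zero_le 1)) (hc.2 1).2]
  change cumVal v (projIcc 0 1 zero_le_one (max p.1 p.2)) -
    cumVal v (projIcc 0 1 zero_le_one p.1) = _
  rw [hv.cumVal_projIcc, hv.cumVal_projIcc, (hv.cumVal_mono hδ).map_max, ← max_sub_sub_right,
    sub_self]

theorem share_true_add_share_false (hv : IsValueDensity δ Δ v) (p : ℝ × ℝ) :
    share v p true + share v p false = 1 := by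
  have hc := validCuts_cutsAt p
  unfold share
  set c := cutsAt p
  have hle : c 0 ≤ c 1 := hc.1 (Fin.zero_le 1)
  have hint : IntegrableOn v (Icc 0 1) :=
    (integrable_indicator_iff measurableSet_Icc).mp hv.integrable_indicator
  have hdisj : AEDisjoint volume (Icc 0 (c 0)) (Icc (c 1) 1) :=
    measure_mono_null (t := {c 0}) (fun z hz ↦ le_antisymm hz.1.2 (hle.trans hz.2.1)) (by simp)
  have hunion : pieceVal v (Icc 0 (c 0) ∪ Icc (c 1) 1) =
      pieceVal v (Icc 0 (c 0)) + pieceVal v (Icc (c 1) 1) :=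
    setIntegral_union₀ hdisj measurableSet_Icc.nullMeasurableSet
      (hint.mono_set (Icc_subset_Icc_right (hc.2 0).2))
      (hint.mono_set (Icc_subset_Icc_left (hc.2 1).1))
  rw [altPiece_two_true, altPiece_two_false, hunion,
    hv.pieceVal_Icc le_rfl (hc.2 0).1 (hc.2 0).2, hv.pieceVal_Icc (hc.2 0).1 hle (hc.2 1).2,
    hv.pieceVal_Icc (hc.2 1).1 (hc.2 1).2 le_rfl, cumVal_zero, hv.cumVal_one]
  ring

theorem share_true (hδ : 0 ≤ δ) (hv : IsValueDensity δ Δ v) (p : ℝ × ℝ) :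
    share v p true = 1 - max 0 (cumVal v p.2 - cumVal v p.1) := by
  rw [← hv.share_false hδ, ← hv.share_true_add_share_false p, add_sub_cancel_right]

theorem share_not (hv : IsValueDensity δ Δ v) (p : ℝ × ℝ) (b : Bool) :
    share v p (!b) = 1 - share v p b := by
  have := hv.share_true_add_share_false p
  cases b
  · rw [Bool.not_false]
    linarith
  · rw [Bool.not_true]
    linarith

theorem share_nonneg (hδ : 0 ≤ δ) (hv : IsValueDensity δ Δ v) (p : ℝ × ℝ) (b : Bool) :
    0 ≤ share v p b := by
  cases b
  · rw [hv.share_false hδ]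
    exact le_max_left _ _
  · rw [hv.share_true hδ, sub_nonneg]
    exact max_le zero_le_one (by linarith [hv.cumVal_le_one hδ p.2, hv.cumVal_nonneg hδ p.1])

theorem share_le_one (hδ : 0 ≤ δ) (hv : IsValueDensity δ Δ v) (p : ℝ × ℝ) (b : Bool) :
    share v p b ≤ 1 := by
  linarith [hv.share_not p b, hv.share_nonneg hδ p (!b)]

theorem share_false_mono (hδ : 0 ≤ δ) (hv : IsValueDensity δ Δ v) (hx : x' ≤ x) (hy : y ≤ y') :
    share v (x, y) false ≤ share v (x', y') false := by
  rw [hv.share_false hδ, hv.share_false hδ]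
  exact max_le_max_left 0 (sub_le_sub (hv.cumVal_mono hδ hy) (hv.cumVal_mono hδ hx))

theorem share_true_mono (hδ : 0 ≤ δ) (hv : IsValueDensity δ Δ v) (hx : x ≤ x') (hy : y' ≤ y) :
    share v (x, y) true ≤ share v (x', y') true := by
  linarith [hv.share_false_mono hδ hx hy, hv.share_true_add_share_false (x, y),
    hv.share_true_add_share_false (x', y')]

end IsValueDensity

/-- Bob's regret in a round in which the cake is cut at `p` and he takes piece `b`. -/
def roundRegret (v : ℝ → ℝ) (p : ℝ × ℝ) (b : Bool) : ℝ :=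
  max (share v p true) (share v p false) - share v p b

theorem roundRegret_nonneg (v : ℝ → ℝ) (p : ℝ × ℝ) (b : Bool) : 0 ≤ roundRegret v p b := by
  cases b
  · exact sub_nonneg.mpr (le_max_right _ _)
  · exact sub_nonneg.mpr (le_max_left _ _)

theorem IsValueDensity.one_sub_two_mul_share_le_roundRegret {δ Δ : ℝ} {v : ℝ → ℝ}
    (hv : IsValueDensity δ Δ v) (p : ℝ × ℝ) (b : Bool) :
    1 - 2 * share v p b ≤ roundRegret v p b := by
  have hother : share v p (!b) ≤ max (share v p true) (share v p false) := by
    cases b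
    · exact le_max_left _ _
    · exact le_max_right _ _
  rw [roundRegret]
  linarith [hv.share_not p b]

/-! ### The search along the grid -/

/-- Undo the last advance, by `h`, of the cut that belongs to piece `b`: moving the first cut
right shrinks the middle piece, moving the second one right shrinks the outer piece. -/
def retreat (h : ℝ) : Bool → ℝ × ℝ → ℝ × ℝ
  | false, p => (p.1 - h, p.2)
  | true, p => (p.1, p.2 - h)

/-- Enlarge piece `b` by moving cuts by `h`. For the middle piece both cuts move, since one of
them may already be at the end of the cake. -/
def enlarge (h : ℝ) : Bool → ℝ × ℝ → ℝ × ℝ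
  | false, p => (p.1 - h, p.2 + h)
  | true, p => (p.1, p.2 - h)

/-- The cuts at the grid indices `n false` and `n true` of the grid of mesh `h`. -/
def gridPoint (h : ℝ) (n : Bool → ℕ) : ℝ × ℝ := (n false * h, n true * h)

/-- The grid indices after the cut that belongs to piece `b` has moved one step right. -/
def advance (b : Bool) (n : Bool → ℕ) : Bool → ℕ := n + Pi.single b 1

theorem advance_self (b : Bool) (n : Bool → ℕ) : advance b n b = n b + 1 := by
  simp [advance]

theorem advance_of_ne {b b' : Bool} (hb : b' ≠ b) (n : Bool → ℕ) : advance b n b' = n b' := by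
  simp [advance, hb]

theorem advance_false_add_advance_true (b : Bool) (n : Bool → ℕ) :
    advance b n false + advance b n true = n false + n true + 1 := by
  cases b
  · rw [advance_self, advance_of_ne (by simp), add_right_comm]
  · rw [advance_self, advance_of_ne (by simp), add_assoc]

theorem retreat_gridPoint_advance (h : ℝ) (b : Bool) (n : Bool → ℕ) :
    retreat h b (gridPoint h (advance b n)) = gridPoint h n := by
  cases b <;> ext <;> simp [retreat, gridPoint, advance, add_mul]

/-- Alice's memory while she searches the grid of halving cuts. -/
structure SearchState where
  /-- The grid indices of the two cuts currently explored. -/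
  pos : Bool → ℕ
  /-- How often Bob has taken each of the pieces at the current cuts. -/
  count : Bool → ℕ
  /-- The cuts, with the piece intended for Bob, that are best for Alice so far. -/
  best : (ℝ × ℝ) × Bool

/-- Alice's value of cuts `o.1` if Bob takes the piece `o.2`. -/
def offerValue (v : ℝ → ℝ) (o : (ℝ × ℝ) × Bool) : ℝ := share v o.1 (!o.2)

/-- Whichever of two offers is better for Alice. -/
def betterOffer (v : ℝ → ℝ) (o o' : (ℝ × ℝ) × Bool) : (ℝ × ℝ) × Bool :=
  if offerValue v o ≤ offerValue v o' then o' else o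

theorem offerValue_betterOffer (v : ℝ → ℝ) (o o' : (ℝ × ℝ) × Bool) :
    offerValue v (betterOffer v o o') = max (offerValue v o) (offerValue v o') := by
  rw [betterOffer, apply_ite (offerValue v), max_def]

theorem betterOffer_eq_or_eq (v : ℝ → ℝ) (o o' : (ℝ × ℝ) × Bool) :
    betterOffer v o o' = o' ∨ betterOffer v o o' = o := by
  unfold betterOffer
  exact ite_eq_or_eq _ _ _

namespace SearchState

/-- The search starts with both cuts at `0`; the initial best offer leaves all to Bob. -/
def init : SearchState := ⟨0, 0, ((0, 1), false)⟩

/-- The search is over once the second cut has left the cake. -/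
def Finished (h : ℝ) (s : SearchState) : Prop := 1 < s.pos true * h

/-- The cuts Alice makes: those under exploration, and the best ones when the search is over. -/
def cuts (h : ℝ) (s : SearchState) : ℝ × ℝ :=
  if s.Finished h then s.best.1 else gridPoint h s.pos

/-- Bob has taken piece `b` once more at the current cuts. -/
def tally (b : Bool) (s : SearchState) : SearchState :=
  { s with count := advance b s.count }

/-- Bob has taken piece `b` often enough to prove that it is worth half the cake to him, up to
the precision of the grid: offer him a slightly larger one later and explore a smaller one now. -/
def shrink (vA : ℝ → ℝ) (h : ℝ) (b : Bool) (s : SearchState) : SearchState :=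
  ⟨advance b s.pos, 0, betterOffer vA s.best (enlarge h b (gridPoint h s.pos), b)⟩

/-- Alice's update when Bob takes piece `b`; answers up to the `M`-th are only counted. -/
def next (vA : ℝ → ℝ) (h M : ℝ) (b : Bool) (s : SearchState) : SearchState :=
  if s.Finished h then s
  else if (s.count b + 1 : ℝ) ≤ M then s.tally b
  else s.shrink vA h b

/-- The states visited when Bob's answers are `b 0, b 1, …`. -/
def run (vA : ℝ → ℝ) (h M : ℝ) (b : ℕ → Bool) : ℕ → SearchState
  | 0 => init
  | t + 1 => (run vA h M b t).next vA h M (b t)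

end SearchState

/-- Alice's strategy of searching with mesh `h T` and patience `M T` at horizon `T`. -/
def searchStrategy (vA : ℝ → ℝ) (h M : ℕ → ℝ) : AliceStrategy 2 := fun T hist ↦
  cutsAt ((hist.foldl (fun s r ↦ s.next vA (h T) (M T) r.2) SearchState.init).cuts (h T))

theorem aliceValid_searchStrategy (vA : ℝ → ℝ) (h M : ℕ → ℝ) :
    AliceValid 2 (searchStrategy vA h M) :=
  fun _ _ ↦ validCuts_cutsAt _

theorem roundCuts_searchStrategy (vA : ℝ → ℝ) (h M : ℕ → ℝ) (SB : BobStrategy 2) (T t : ℕ) :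
    roundCuts 2 (searchStrategy vA h M) SB T t =
      cutsAt ((SearchState.run vA (h T) (M T)
        (roundChoice 2 (searchStrategy vA h M) SB T) t).cuts (h T)) := by
  have hfold : (playHist 2 (searchStrategy vA h M) SB T t).foldl
      (fun s r ↦ s.next vA (h T) (M T) r.2) SearchState.init =
      SearchState.run vA (h T) (M T) (roundChoice 2 (searchStrategy vA h M) SB T) t := by
    induction t with
    | zero => rfl
    | succ t ih =>
      rw [playHist, List.foldl_append, ih]
      rfl
  rw [roundCuts, searchStrategy, hfold]

/-! ### Invariant of the search -/

/-- The state of knowledge about piece `b` when the search is at the grid indices `n`: its cut has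
not moved yet, or with this cut one step back the piece is worth almost half the cake to Bob. -/
def Accepted (δ : ℝ) (vB : ℝ → ℝ) (h : ℝ) (b : Bool) (n : Bool → ℕ) : Prop :=
  n b = 0 ∨ 1 / 2 - δ * h / 2 ≤ share vB (retreat h b (gridPoint h n)) b

/-- What the search guarantees in state `s` when Bob's regret so far is `R`. By `best_ge`, Alice
has considered every grid position that either of the cuts has passed. -/
structure SearchInvariant (δ : ℝ) (vA vB : ℝ → ℝ) (h M : ℝ) (s : SearchState) (R : ℝ) :
    Prop where
  count_le : ∀ b, (s.count b : ℝ) ≤ M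
  pos_true_le : s.pos true * h ≤ 1 + h
  accepted : ∀ b, Accepted δ vB h b s.pos
  best_accepted : 1 / 2 + δ * h / 2 ≤ share vB s.best.1 s.best.2
  best_ge : ∀ b, ∀ m < s.pos b, ∃ n : Bool → ℕ, n b = m ∧ Accepted δ vB h (!b) n ∧
    offerValue vA (enlarge h b (gridPoint h n), b) ≤ offerValue vA s.best
  regret_ge : ∀ b, share vB (gridPoint h s.pos) b ≤ 1 / 2 - δ * h / 2 →
    s.count b * (δ * h) ≤ R

section Invariant

variable {δ Δ h M R : ℝ} {vA vB : ℝ → ℝ} {s : SearchState} {b : Bool} {n : Bool → ℕ}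

namespace IsValueDensity

theorem add_le_share_enlarge (hδ : 0 ≤ δ) (hh : 0 ≤ h) (hB : IsValueDensity δ Δ vB) {p : ℝ × ℝ}
    (hp : p.2 ∈ Icc 0 1) (hpos : 0 < share vB p b) :
    min 1 (share vB p b + δ * h) ≤ share vB (enlarge h b p) b := by
  cases b
  · rw [hB.share_false hδ] at hpos ⊢
    have hlt : 0 < cumVal vB p.2 - cumVal vB p.1 := by simpa using hpos
    have hle : p.1 ≤ 1 := by
      by_contra! hp₁
      linarith [hB.cumVal_of_one_le hp₁.le, hB.cumVal_le_one hδ p.2]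
    have hleft := hB.cumVal_sub_le_max hh hle
    have hright := hB.min_le_cumVal_add hh hp.1
    have hmono := hB.cumVal_mono hδ (sub_le_self p.1 hh)
    have hmono' := hB.cumVal_mono hδ (le_add_of_nonneg_right hh : p.2 ≤ p.2 + h)
    rw [hB.share_false hδ, max_eq_right hlt.le]
    refine le_max_of_le_right ?_
    simp only [enlarge]
    rcases le_max_iff.mp hleft with hl | hl
    · rcases min_le_iff.mp hright with hr | hr
      · exact min_le_of_left_le (by linarith)
      · exact min_le_of_right_le (by linarith)
    · exact min_le_of_right_le (by linarith)
  · have hright := hB.cumVal_sub_le_max hh hp.2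
    rw [hB.share_true hδ, hB.share_true hδ]
    simp only [enlarge]
    rcases le_max_iff.mp hright with hr | hr
    · refine min_le_of_left_le ?_
      rw [max_eq_left (by linarith [hB.cumVal_nonneg hδ p.1]), sub_zero]
    · rcases le_total (cumVal vB (p.2 - h) - cumVal vB p.1) 0 with h₀ | h₀
      · refine min_le_of_left_le ?_
        rw [max_eq_left h₀, sub_zero]
      · refine min_le_of_right_le ?_
        rw [max_eq_right h₀]
        linarith [le_max_right 0 (cumVal vB p.2 - cumVal vB p.1)]

theorem share_gridPoint_le_advance_not (hδ : 0 ≤ δ) (hh : 0 ≤ h) (hB : IsValueDensity δ Δ vB)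
    (b : Bool) (n : Bool → ℕ) :
    share vB (retreat h b (gridPoint h n)) b ≤
      share vB (retreat h b (gridPoint h (advance (!b) n))) b := by
  cases b
  · exact hB.share_false_mono hδ (by simp [gridPoint, advance])
      (by simp [gridPoint, advance, add_mul, hh])
  · exact hB.share_true_mono hδ (by simp [gridPoint, advance, add_mul, hh])
      (by simp [gridPoint, advance])

end IsValueDensity

theorem Accepted.advance_not (hδ : 0 ≤ δ) (hh : 0 ≤ h) (hB : IsValueDensity δ Δ vB)
    (hn : Accepted δ vB h b n) : Accepted δ vB h b (advance (!b) n) := by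
  refine hn.imp (fun h₀ ↦ ?_) fun hle ↦ hle.trans (hB.share_gridPoint_le_advance_not hδ hh b n)
  rwa [advance_of_ne (by simp)]

theorem accepted_advance (hle : 1 / 2 - δ * h / 2 ≤ share vB (gridPoint h n) b) :
    Accepted δ vB h b (advance b n) := by
  refine Or.inr ?_
  rwa [retreat_gridPoint_advance]

namespace SearchInvariant

theorem init (hδ : 0 ≤ δ) (hh : 0 ≤ h) (hM : 0 ≤ M) (hδh : δ * h ≤ 1)
    (hB : IsValueDensity δ Δ vB) : SearchInvariant δ vA vB h M .init 0 where
  count_le := by simpa [SearchState.init] using hM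
  pos_true_le := by
    have : (0 : ℝ) ≤ 1 + h := by positivity
    simpa [SearchState.init] using this
  accepted _ := Or.inl rfl
  best_accepted := by
    rw [SearchState.init, hB.share_false hδ, hB.cumVal_one, cumVal_zero]
    exact le_max_of_le_right (by linarith)
  best_ge := by simp [SearchState.init]
  regret_ge := by simp [SearchState.init]

theorem mono {R' : ℝ} (hs : SearchInvariant δ vA vB h M s R) (hR : R ≤ R') :
    SearchInvariant δ vA vB h M s R' :=
  { hs with regret_ge := fun b hb ↦ (hs.regret_ge b hb).trans hR }

theorem count_succ_mul_le (hB : IsValueDensity δ Δ vB) (hs : SearchInvariant δ vA vB h M s R)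
    (hb : share vB (gridPoint h s.pos) b ≤ 1 / 2 - δ * h / 2) :
    (s.count b + 1) * (δ * h) ≤ R + roundRegret vB (gridPoint h s.pos) b := by
  linarith [hs.regret_ge b hb, hB.one_sub_two_mul_share_le_roundRegret (gridPoint h s.pos) b]

theorem tally (hB : IsValueDensity δ Δ vB) (hs : SearchInvariant δ vA vB h M s R)
    (hcount : (s.count b + 1 : ℝ) ≤ M) :
    SearchInvariant δ vA vB h M (s.tally b) (R + roundRegret vB (gridPoint h s.pos) b) := by
  have hs' := hs.mono (le_add_of_nonneg_right (roundRegret_nonneg vB (gridPoint h s.pos) b))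
  refine { hs' with count_le := fun b' ↦ ?_, regret_ge := fun b' hb' ↦ ?_ }
  · rcases eq_or_ne b' b with rfl | hne
    · simpa [SearchState.tally, advance_self] using hcount
    · simpa [SearchState.tally, advance_of_ne hne] using hs.count_le b'
  · rcases eq_or_ne b' b with rfl | hne
    · simpa [SearchState.tally, advance_self] using hs.count_succ_mul_le hB hb'
    · simpa [SearchState.tally, advance_of_ne hne] using hs'.regret_ge b' hb'

theorem half_le_share_of_lt_count (hδ : 0 < δ) (hh : 0 < h) (hB : IsValueDensity δ Δ vB)
    (hs : SearchInvariant δ vA vB h M s R) (hcount : M < s.count b + 1)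
    (hR : R + roundRegret vB (gridPoint h s.pos) b ≤ M * (δ * h)) :
    1 / 2 - δ * h / 2 ≤ share vB (gridPoint h s.pos) b := by
  by_contra! hlt
  have hlies := hs.count_succ_mul_le hB hlt.le
  exact (mul_lt_mul_of_pos_right hcount (mul_pos hδ hh)).not_ge (hlies.trans hR)

theorem shrink (hδ : 0 < δ) (hh : 0 < h) (hδh : δ * h < 1) (hB : IsValueDensity δ Δ vB)
    (hs : SearchInvariant δ vA vB h M s R) (hR : 0 ≤ R) (hM : 0 ≤ M) (hfin : ¬ s.Finished h)
    (hb : 1 / 2 - δ * h / 2 ≤ share vB (gridPoint h s.pos) b) :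
    SearchInvariant δ vA vB h M (s.shrink vA h b) R where
  count_le _ := by simpa [SearchState.shrink] using hM
  pos_true_le := by
    have hle : s.pos true * h ≤ 1 := not_lt.mp hfin
    cases b
    · simpa [SearchState.shrink, advance] using hle.trans (le_add_of_nonneg_right hh.le)
    · simpa [SearchState.shrink, advance, add_mul] using hle
  accepted b' := by
    rcases eq_or_ne b' b with rfl | hne
    · exact accepted_advance hb
    · obtain rfl : b = !b' := Bool.eq_not.mpr hne.symm
      exact (hs.accepted b').advance_not hδ.le hh.le hB
  best_accepted := by
    rw [SearchState.shrink]
    rcases betterOffer_eq_or_eq vA s.best (enlarge h b (gridPoint h s.pos), b) with heq | heq <;>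
      rw [heq]
    · refine le_trans (le_min ?_ ?_) (hB.add_le_share_enlarge hδ.le hh.le
        ⟨mul_nonneg (Nat.cast_nonneg _) hh.le, not_lt.mp hfin⟩ (by linarith)) <;> linarith
    · exact hs.best_accepted
  best_ge b' m hm := by
    rw [SearchState.shrink, offerValue_betterOffer]
    have hold : m < s.pos b' → ∃ n : Bool → ℕ, n b' = m ∧ Accepted δ vB h (!b') n ∧
        offerValue vA (enlarge h b' (gridPoint h n), b') ≤
          max (offerValue vA s.best) (offerValue vA (enlarge h b (gridPoint h s.pos), b)) :=
      fun hlt ↦ (hs.best_ge b' m hlt).imp fun _ ⟨hnm, hacc, hle⟩ ↦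
        ⟨hnm, hacc, le_max_of_le_left hle⟩
    rcases eq_or_ne b' b with rfl | hne
    · change m < advance b' s.pos b' at hm
      rw [advance_self, Nat.lt_succ_iff_lt_or_eq] at hm
      rcases hm with hlt | rfl
      · exact hold hlt
      · exact ⟨s.pos, rfl, hs.accepted _, le_max_right _ _⟩
    · change m < advance b s.pos b' at hm
      rw [advance_of_ne hne] at hm
      exact hold hm
  regret_ge _ _ := by simpa [SearchState.shrink] using hR

theorem next (hδ : 0 < δ) (hh : 0 < h) (hδh : δ * h < 1) (hB : IsValueDensity δ Δ vB)
    (hs : SearchInvariant δ vA vB h M s R) (hR : 0 ≤ R) (b : Bool)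
    (hRM : R + roundRegret vB (s.cuts h) b ≤ M * (δ * h)) :
    SearchInvariant δ vA vB h M (s.next vA h M b) (R + roundRegret vB (s.cuts h) b) := by
  have hR' : R ≤ R + roundRegret vB (s.cuts h) b :=
    le_add_of_nonneg_right (roundRegret_nonneg vB _ b)
  have hM : 0 ≤ M := (Nat.cast_nonneg _).trans (hs.count_le b)
  by_cases hfin : s.Finished h
  · rw [SearchState.next, if_pos hfin]
    exact hs.mono hR'
  have hcuts : s.cuts h = gridPoint h s.pos := if_neg hfin
  rw [hcuts] at hR' hRM ⊢
  rw [SearchState.next, if_neg hfin]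
  split_ifs with hcount
  · exact hs.tally hB hcount
  · exact (hs.mono hR').shrink hδ hh hδh hB (hR.trans hR') hM hfin
      (hs.half_le_share_of_lt_count hδ hh hB (not_le.mp hcount) hRM)

theorem run (hδ : 0 < δ) (hh : 0 < h) (hδh : δ * h < 1) (hM : 0 ≤ M)
    (hB : IsValueDensity δ Δ vB) (b : ℕ → Bool) (t : ℕ)
    (hR : ∑ u ∈ Finset.range t, roundRegret vB ((SearchState.run vA h M b u).cuts h) (b u) ≤
      M * (δ * h)) :
    SearchInvariant δ vA vB h M (SearchState.run vA h M b t)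
      (∑ u ∈ Finset.range t, roundRegret vB ((SearchState.run vA h M b u).cuts h) (b u)) := by
  induction t with
  | zero =>
    rw [Finset.sum_range_zero]
    exact init hδ.le hh.le hM hδh.le hB
  | succ t ih =>
    rw [Finset.sum_range_succ] at hR ⊢
    have hnonneg := roundRegret_nonneg vB ((SearchState.run vA h M b t).cuts h) (b t)
    exact (ih (by linarith)).next hδ hh hδh hB
      (Finset.sum_nonneg fun u _ ↦ roundRegret_nonneg _ _ _) (b t) hR

end SearchInvariant

end Invariant

/-! ### Optimality of the best offer -/

theorem exists_nat_mul_le_lt {h : ℝ} (hh : 0 < h) (x : ℝ) :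
    ∃ n : ℕ, n * h ≤ max 0 x ∧ x < n * h + h := by
  refine ⟨⌊max 0 x / h⌋₊, ?_, ?_⟩
  · exact (le_div_iff₀ hh).mp (Nat.floor_le (by positivity))
  · have hlt := (div_lt_iff₀ hh).mp (Nat.lt_floor_add_one (max 0 x / h))
    linarith [le_max_right 0 x]

theorem IsValueDensity.cumVal_max_zero {δ Δ : ℝ} {v : ℝ → ℝ} (hδ : 0 ≤ δ)
    (hv : IsValueDensity δ Δ v) (x : ℝ) : cumVal v (max 0 x) = cumVal v x := by
  rw [(hv.cumVal_mono hδ).map_max, cumVal_zero, max_eq_right (hv.cumVal_nonneg hδ x)]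

theorem stackelbergValue_two_le {vA vB : ℝ → ℝ} {C : ℝ} (hC : 0 ≤ C)
    (hle : ∀ p ≤ (1 : ℝ × ℝ), ∀ b, 1 / 2 ≤ share vB p (!b) → share vA p b ≤ C) :
    stackelbergValue 2 vA vB ≤ C := by
  refine Real.sSup_le ?_ hC
  rintro _ ⟨c, b, hc, hhalf, rfl⟩
  have hshare := hle (c 0, c 1) ⟨(hc.2 0).2, (hc.2 1).2⟩ b
  rw [share, share, hc.cutsAt_eq] at hshare
  exact hshare hhalf

section Optimality

variable {δ Δ h M R : ℝ} {vA vB : ℝ → ℝ} {s : SearchState} {n : Bool → ℕ}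

theorem Accepted.cumVal_false_le (hδ : 0 ≤ δ) (hh : 0 ≤ h) (hδh : δ * h < 1)
    (hB : IsValueDensity δ Δ vB) (hn : Accepted δ vB h false n) :
    cumVal vB (n false * h - h) ≤ max 0 (cumVal vB (n true * h) - 1 / 2 + δ * h / 2) := by
  rcases hn with h₀ | hle
  · refine le_max_of_le_left (cumVal_of_nonpos vB ?_).le
    simpa [h₀] using hh
  · refine le_max_of_le_right ?_
    rw [hB.share_false hδ] at hle
    rcases le_max_iff.mp hle with hle | hle
    · linarith
    · change _ ≤ cumVal vB (n true * h) - cumVal vB (n false * h - h) at hle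
      linarith

theorem Accepted.cumVal_true_le (hδ : 0 ≤ δ) (hh : 0 ≤ h) (hB : IsValueDensity δ Δ vB)
    (hn : Accepted δ vB h true n) :
    cumVal vB (n true * h - h) ≤ cumVal vB (n false * h) + 1 / 2 + δ * h / 2 := by
  rcases hn with h₀ | hle
  · rw [cumVal_of_nonpos vB (by simpa [h₀] using hh)]
    have := hB.cumVal_nonneg hδ (n false * h)
    positivity
  · rw [hB.share_true hδ] at hle
    have hdiff : cumVal vB (n true * h - h) - cumVal vB (n false * h) ≤ _ := le_max_right 0 _
    change _ ≤ 1 - max 0 (cumVal vB (n true * h - h) - cumVal vB (n false * h)) at hle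
    linarith

namespace SearchInvariant

theorem pos_false_le (hδ : 0 ≤ δ) (hh : 0 ≤ h) (hδh : δ * h < 1) (hB : IsValueDensity δ Δ vB)
    (hs : SearchInvariant δ vA vB h M s R) : s.pos false * h ≤ 1 + h := by
  by_contra! hlt
  have hle := (hs.accepted false).cumVal_false_le hδ hh hδh hB
  rw [hB.cumVal_of_one_le (by linarith)] at hle
  have hlt' : max 0 (cumVal vB (s.pos true * h) - 1 / 2 + δ * h / 2) < 1 :=
    max_lt one_pos (by linarith [hB.cumVal_le_one hδ (s.pos true * h)])
  exact hle.not_gt hlt'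

theorem share_false_le (hδ : 0 < δ) (hh : 0 < h) (hδh : δ * h < 1) (hA : IsValueDensity δ Δ vA)
    (hB : IsValueDensity δ Δ vB) (hs : SearchInvariant δ vA vB h M s R) (hfin : s.Finished h)
    {p : ℝ × ℝ} (hp : p.2 ≤ 1) (hhalf : 1 / 2 ≤ share vB p true) :
    share vA p false ≤ offerValue vA s.best + 6 * Δ * h := by
  have hΔ : 0 < Δ := hδ.trans_le hA.lower_le_upper
  have hΔh : 0 < Δ * h := mul_pos hΔ hh
  -- The comparison offer was made when the second cut left `m * h`, the grid point below `p.2`.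
  obtain ⟨m, hm, hm'⟩ := exists_nat_mul_le_lt hh p.2
  have hmpos : m < s.pos true := by
    have hlt : m * h < s.pos true * h := (hm.trans (max_le zero_le_one hp)).trans_lt hfin
    exact_mod_cast lt_of_mul_lt_mul_right hlt hh.le
  obtain ⟨n, rfl, hacc, hbest⟩ := hs.best_ge true m hmpos
  have hB_le : cumVal vB (n false * h - h) ≤ cumVal vB p.1 + δ * (h / 2) := by
    rw [hB.share_true hδ.le] at hhalf
    refine (hacc.cumVal_false_le hδ.le hh.le hδh hB).trans (max_le ?_ ?_)
    · have := hB.cumVal_nonneg hδ.le p.1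
      positivity
    · have hmono := hB.cumVal_mono hδ.le hm
      rw [hB.cumVal_max_zero hδ.le] at hmono
      linarith [le_max_right 0 (cumVal vB p.2 - cumVal vB p.1)]
  have hleft : cumVal vA (n false * h - h) ≤ cumVal vA p.1 + Δ * (h / 2) :=
    hA.cumVal_le_add_of_cumVal_le_add hδ hB (half_pos hh).le hB_le
  have hleft' := hA.cumVal_sub_le hδ.le (sub_le_self (n false * h) hh.le)
  have hright := hA.cumVal_mono hδ.le hm'.le
  have hright' := hA.cumVal_sub_le hδ.le
    (show n true * h - h ≤ n true * h + h by linarith)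
  have hoffer : cumVal vA (n true * h - h) - cumVal vA (n false * h) ≤ offerValue vA s.best := by
    refine le_trans ?_ hbest
    rw [offerValue, Bool.not_true, hA.share_false hδ.le]
    exact le_max_right _ _
  have hnonneg : 0 ≤ offerValue vA s.best := hA.share_nonneg hδ.le _ _
  rw [hA.share_false hδ.le]
  exact max_le (by linarith) (by linarith)

theorem lt_pos_false (hδ : 0 < δ) (hh : 0 < h) (hδh : δ * h < 1) {N : ℕ} (hN : N * h = 1)
    (hB : IsValueDensity δ Δ vB) (hs : SearchInvariant δ vA vB h M s R) (hfin : s.Finished h)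
    {m : ℕ} (hm : cumVal vB (m * h) ≤ max 0 (1 / 2 - δ * h)) : m < s.pos false := by
  by_contra! hle
  have hlast : 1 ≤ s.pos true * h - h := by
    have hlt : N * h < s.pos true * h := hN.trans_lt hfin
    have hsucc : (N + 1 : ℝ) ≤ s.pos true := by exact_mod_cast lt_of_mul_lt_mul_right hlt hh.le
    linarith [mul_le_mul_of_nonneg_right hsucc hh.le]
  have hacc := (hs.accepted true).cumVal_true_le hδ.le hh.le hB
  rw [hB.cumVal_of_one_le hlast] at hacc
  have hmono := hB.cumVal_mono hδ.le
    (mul_le_mul_of_nonneg_right (Nat.cast_le (α := ℝ).mpr hle) hh.le)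
  have hlt : max 0 (1 / 2 - δ * h) < 1 / 2 - δ * h / 2 :=
    max_lt (by linarith) (by linarith [mul_pos hδ hh])
  linarith

theorem share_true_le (hδ : 0 < δ) (hh : 0 < h) (hδh : δ * h < 1) {N : ℕ} (hN : N * h = 1)
    (hA : IsValueDensity δ Δ vA) (hB : IsValueDensity δ Δ vB)
    (hs : SearchInvariant δ vA vB h M s R) (hfin : s.Finished h)
    {p : ℝ × ℝ} (hp : p.1 ≤ 1) (hhalf : 1 / 2 ≤ share vB p false) :
    share vA p true ≤ offerValue vA s.best + 6 * Δ * h := by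
  have hΔ : 0 < Δ := hδ.trans_le hA.lower_le_upper
  have hΔh : 0 < Δ * h := mul_pos hΔ hh
  have hδh₀ : 0 < δ * h := mul_pos hδ hh
  have hhalf' : 1 / 2 ≤ cumVal vB p.2 - cumVal vB p.1 := by
    rw [hB.share_false hδ.le] at hhalf
    exact (le_max_iff.mp hhalf).resolve_left (by norm_num)
  -- The comparison offer was made when the first cut left `m * h`. One mesh is given up here to be
  -- sure, despite the tolerance in `Accepted`, that it got past `m * h`.
  obtain ⟨m, hm, hm'⟩ := exists_nat_mul_le_lt hh (p.1 - h)
  have hBm : cumVal vB (m * h) ≤ max 0 (cumVal vB p.1 - δ * h) := by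
    have hmono := hB.cumVal_mono hδ.le hm
    rw [hB.cumVal_max_zero hδ.le] at hmono
    exact hmono.trans (hB.cumVal_sub_le_max hh.le hp)
  have hmpos : m < s.pos false := hs.lt_pos_false hδ hh hδh hN hB hfin <| hBm.trans <|
    max_le_max_left 0 <| by linarith [hB.cumVal_le_one hδ.le p.2]
  obtain ⟨n, rfl, hacc, hbest⟩ := hs.best_ge false m hmpos
  have hB_le : cumVal vB (n true * h - h) ≤ cumVal vB p.2 + δ * (h / 2) := by
    have hle : cumVal vB (n false * h) ≤ cumVal vB p.1 :=
      hBm.trans (max_le (hB.cumVal_nonneg hδ.le p.1) (by linarith))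
    linarith [hacc.cumVal_true_le hδ.le hh.le hB]
  have hright : cumVal vA (n true * h - h) ≤ cumVal vA p.2 + Δ * (h / 2) :=
    hA.cumVal_le_add_of_cumVal_le_add hδ hB (half_pos hh).le hB_le
  have hright' := hA.cumVal_sub_le hδ.le (show n true * h - h ≤ n true * h + h by linarith)
  have hleft := hA.cumVal_mono hδ.le (show p.1 ≤ n false * h + 2 * h by linarith)
  have hleft' := hA.cumVal_sub_le hδ.le
    (show n false * h - h ≤ n false * h + 2 * h by linarith)
  have hoffer : share vA (n false * h - h, n true * h + h) true ≤ offerValue vA s.best := hbest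
  rw [hA.share_true hδ.le] at hoffer ⊢
  have hmax : max 0 (cumVal vA (n true * h + h) - cumVal vA (n false * h - h)) ≤
      max 0 (cumVal vA p.2 - cumVal vA p.1) + 6 * Δ * h :=
    max_le (by positivity) (by linarith [le_max_right 0 (cumVal vA p.2 - cumVal vA p.1)])
  linarith

end SearchInvariant

end Optimality

/-! ### Regret of the search -/

/-- A measure of progress that grows by at least one in every round of the search. A move of a cut
resets the counts, which sum to at most `2 * M`, and is therefore worth `2 * M + 1` counts. -/
def SearchState.potential (M : ℝ) (s : SearchState) : ℝ :=
  (2 * M + 1) * (s.pos false + s.pos true) + (s.count false + s.count true)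

section Regret

variable {δ Δ h M R : ℝ} {N : ℕ} {vA vB : ℝ → ℝ} {s : SearchState}

namespace SearchInvariant

theorem potential_add_one_le (hs : SearchInvariant δ vA vB h M s R) (hfin : ¬ s.Finished h)
    (b : Bool) : s.potential M + 1 ≤ (s.next vA h M b).potential M := by
  rw [SearchState.next, if_neg hfin]
  split_ifs
  · have hsum : ((advance b s.count false : ℝ) + advance b s.count true) =
        s.count false + s.count true + 1 := by
      exact_mod_cast advance_false_add_advance_true b s.count
    simp only [SearchState.potential, SearchState.tally]
    linarith
  · have hsum : ((advance b s.pos false : ℝ) + advance b s.pos true) =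
        s.pos false + s.pos true + 1 := by
      exact_mod_cast advance_false_add_advance_true b s.pos
    simp only [SearchState.potential, SearchState.shrink, hsum, Pi.zero_apply, Nat.cast_zero]
    linarith [hs.count_le false, hs.count_le true]

theorem potential_le (hδ : 0 ≤ δ) (hh : 0 < h) (hh₁ : h ≤ 1) (hδh : δ * h < 1) (hM : 0 ≤ M)
    (hB : IsValueDensity δ Δ vB) (hs : SearchInvariant δ vA vB h M s R) :
    s.potential M ≤ 5 * (2 * M + 1) / h := by
  have hpos : (s.pos false + s.pos true) * h ≤ 4 := by
    linarith [hs.pos_false_le hδ hh.le hδh hB, hs.pos_true_le]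
  rw [SearchState.potential, le_div_iff₀ hh]
  calc ((2 * M + 1) * (s.pos false + s.pos true) + (s.count false + s.count true)) * h
      = (2 * M + 1) * ((s.pos false + s.pos true) * h) +
          (s.count false + s.count true) * h := by ring
    _ ≤ (2 * M + 1) * 4 + (2 * M) * 1 := by
        gcongr
        linarith [hs.count_le false, hs.count_le true]
    _ ≤ 5 * (2 * M + 1) := by linarith

theorem stackelbergValue_le (hδ : 0 < δ) (hh : 0 < h) (hδh : δ * h < 1) (hN : N * h = 1)
    (hA : IsValueDensity δ Δ vA) (hB : IsValueDensity δ Δ vB)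
    (hs : SearchInvariant δ vA vB h M s R) (hfin : s.Finished h) :
    stackelbergValue 2 vA vB ≤ offerValue vA s.best + 6 * Δ * h := by
  have hΔ : 0 < Δ := hδ.trans_le hA.lower_le_upper
  refine stackelbergValue_two_le ?_ fun p hp b hhalf ↦ ?_
  · have hnonneg : 0 ≤ offerValue vA s.best := hA.share_nonneg hδ.le _ _
    positivity
  · cases b
    · exact hs.share_false_le hδ hh hδh hA hB hfin hp.2 hhalf
    · exact hs.share_true_le hδ hh hδh hN hA hB hfin hp.1 hhalf

theorem mul_le_roundRegret_of_ne (hB : IsValueDensity δ Δ vB)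
    (hs : SearchInvariant δ vA vB h M s R) {b : Bool} (hb : b ≠ s.best.2) :
    δ * h ≤ roundRegret vB s.best.1 b := by
  obtain rfl : b = !s.best.2 := Bool.eq_not.mpr hb
  linarith [hs.best_accepted, hB.share_not s.best.1 s.best.2,
    hB.one_sub_two_mul_share_le_roundRegret s.best.1 (!s.best.2)]

theorem stackelbergValue_sub_share_le (hδ : 0 < δ) (hh : 0 < h) (hδh : δ * h < 1)
    (hN : N * h = 1) (hA : IsValueDensity δ Δ vA) (hB : IsValueDensity δ Δ vB)
    (hs : SearchInvariant δ vA vB h M s R) (b : Bool) :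
    stackelbergValue 2 vA vB - share vA (s.cuts h) (!b) ≤
      ((s.next vA h M b).potential M - s.potential M) + 6 * Δ * h +
        roundRegret vB (s.cuts h) b / (δ * h) := by
  have hΔ : 0 < Δ := hδ.trans_le hA.lower_le_upper
  have hΔh : 0 ≤ 6 * Δ * h := by positivity
  have hεpos : 0 < δ * h := mul_pos hδ hh
  have hregret : 0 ≤ roundRegret vB (s.cuts h) b / (δ * h) :=
    div_nonneg (roundRegret_nonneg vB _ b) hεpos.le
  have hnonneg := hA.share_nonneg hδ.le (s.cuts h) (!b)
  have hstack : stackelbergValue 2 vA vB ≤ 1 :=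
    stackelbergValue_two_le zero_le_one fun p _ b' _ ↦ hA.share_le_one hδ.le p b'
  by_cases hfin : s.Finished h
  · have hcuts : s.cuts h = s.best.1 := if_pos hfin
    have hnext : s.next vA h M b = s := if_pos hfin
    rw [hnext, sub_self, zero_add]
    rcases eq_or_ne b s.best.2 with rfl | hne
    · have hopt := hs.stackelbergValue_le hδ hh hδh hN hA hB hfin
      rw [offerValue, ← hcuts] at hopt
      linarith
    · have hcost : 1 ≤ roundRegret vB (s.cuts h) b / (δ * h) := by
        rw [one_le_div₀ hεpos, hcuts]
        exact hs.mul_le_roundRegret_of_ne hB hne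
      linarith
  · linarith [hs.potential_add_one_le hfin b]

end SearchInvariant

theorem sum_stackelbergValue_sub_share_le (hδ : 0 < δ) (hh : 0 < h) (hδh : δ * h < 1)
    (hN : N * h = 1) (hM : 0 ≤ M) (hA : IsValueDensity δ Δ vA) (hB : IsValueDensity δ Δ vB)
    (b : ℕ → Bool) (T : ℕ)
    (hR : ∑ t ∈ Finset.range T, roundRegret vB ((SearchState.run vA h M b t).cuts h) (b t) ≤
      M * (δ * h)) :
    ∑ t ∈ Finset.range T,
        (stackelbergValue 2 vA vB - share vA ((SearchState.run vA h M b t).cuts h) (!b t)) ≤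
      5 * (2 * M + 1) / h + 6 * Δ * h * T +
        (∑ t ∈ Finset.range T, roundRegret vB ((SearchState.run vA h M b t).cuts h) (b t)) /
          (δ * h) := by
  set s := SearchState.run vA h M b
  have hinv : ∀ t ≤ T, SearchInvariant δ vA vB h M (s t)
      (∑ u ∈ Finset.range t, roundRegret vB ((s u).cuts h) (b u)) := fun t ht ↦
    SearchInvariant.run hδ hh hδh hM hB b t <| hR.trans' <|
      Finset.sum_le_sum_of_subset_of_nonneg (Finset.range_mono ht)
        fun u _ _ ↦ roundRegret_nonneg vB _ _
  have hh₁ : h ≤ 1 := by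
    have hN₁ : (1 : ℝ) ≤ N := by
      exact_mod_cast Nat.one_le_iff_ne_zero.mpr fun h₀ ↦ by simp [h₀] at hN
    exact (le_mul_of_one_le_left hh.le hN₁).trans_eq hN
  have hpot : (s T).potential M - (s 0).potential M ≤ 5 * (2 * M + 1) / h := by
    have hinit : (s 0).potential M = 0 := by simp [s, SearchState.run, SearchState.init,
      SearchState.potential]
    linarith [(hinv T le_rfl).potential_le hδ.le hh hh₁ hδh hM hB]
  calc ∑ t ∈ Finset.range T, (stackelbergValue 2 vA vB - share vA ((s t).cuts h) (!b t))
      ≤ ∑ t ∈ Finset.range T, (((s (t + 1)).potential M - (s t).potential M) + 6 * Δ * h +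
          roundRegret vB ((s t).cuts h) (b t) / (δ * h)) :=
        Finset.sum_le_sum fun t ht ↦
          (hinv t (Finset.mem_range.mp ht).le).stackelbergValue_sub_share_le hδ hh hδh hN hA hB _
    _ = ((s T).potential M - (s 0).potential M) + 6 * Δ * h * T +
          (∑ t ∈ Finset.range T, roundRegret vB ((s t).cuts h) (b t)) / (δ * h) := by
        rw [Finset.sum_add_distrib, Finset.sum_add_distrib,
          Finset.sum_range_sub fun t ↦ (s t).potential M, Finset.sum_const, Finset.card_range,
          nsmul_eq_mul, mul_comm (T : ℝ), Finset.sum_div]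
    _ ≤ _ := by gcongr

theorem aliceRegret_searchStrategy_le {h M : ℕ → ℝ} {T : ℕ} (hδ : 0 < δ) (hN : 1 < N)
    (hmesh : h T = (N : ℝ)⁻¹) (hM : 0 ≤ M T) (hA : IsValueDensity δ Δ vA)
    (hB : IsValueDensity δ Δ vB) (SB : BobStrategy 2)
    (hR : bobRegret 2 vB (searchStrategy vA h M) SB T ≤ R) (hRM : R * N ≤ M T * δ) :
    aliceRegret 2 vA vB (searchStrategy vA h M) SB T ≤
      5 * (2 * M T + 1) * N + 6 * Δ * T / N + R * N / δ := by
  have hN₁ : (1 : ℝ) < N := Nat.one_lt_cast.mpr hN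
  have hN₀ : (0 : ℝ) < N := one_pos.trans hN₁
  have hδN : δ * (N : ℝ)⁻¹ < 1 :=
    (mul_le_of_le_one_left (by positivity) hB.lower_le_one).trans_lt (inv_lt_one_of_one_lt₀ hN₁)
  have hRM' : R ≤ M T * (δ * (N : ℝ)⁻¹) := by
    rwa [← mul_assoc, ← div_eq_mul_inv, le_div_iff₀ hN₀]
  simp only [aliceRegret, bobRegret, roundCuts_searchStrategy, hmesh] at hR ⊢
  refine (sum_stackelbergValue_sub_share_le hδ (inv_pos.mpr hN₀) hδN (mul_inv_cancel₀ hN₀.ne')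
    hM hA hB _ T (hR.trans hRM')).trans ?_
  calc _ ≤ 5 * (2 * M T + 1) / (N : ℝ)⁻¹ + 6 * Δ * (N : ℝ)⁻¹ * T + R / (δ * (N : ℝ)⁻¹) :=
        add_le_add_right (div_le_div_of_nonneg_right hR (by positivity)) _
    _ = 5 * (2 * M T + 1) * N + 6 * Δ * T / N + R * N / δ := by field_simp

end Regret

/-! ### Choice of the parameters -/

/-- The mesh of the search that balances the exploration loss against the loss from rounding. Its
reciprocal is a positive integer, so that the end of the cake lies on the grid. -/
def searchMesh (α : ℝ) (T : ℕ) : ℝ := ((⌊(T : ℝ) ^ ((1 - α) / 3)⌋₊ + 1 : ℕ) : ℝ)⁻¹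

/-- The patience of the search. The factor `L T → ∞` makes it exceed, for large `T`, the number of
times that a Bob of regret at most `c * T ^ α` can take a clearly worse piece, whatever `c` is. -/
def searchPatience (α : ℝ) (L : ℕ → ℝ) (T : ℕ) : ℝ := (T : ℝ) ^ α * L T / searchMesh α T

theorem balanced_regret_le {δ Δ c a t X Y L : ℝ} {N : ℕ} (hδ : 0 < δ) (hΔ : 0 ≤ Δ) (hc : 0 ≤ c)
    (ha : 0 ≤ a) (hL : 1 ≤ L) (hX : 1 ≤ X) (hXY : X ≤ Y) (hY : a * X ^ 2 = Y) (ht : Y * X = t)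
    (hXN : X ≤ N) (hNX : N ≤ 2 * X) :
    5 * (2 * (a * L * N) + 1) * N + 6 * Δ * t / N + c * a * N / δ ≤
      (50 + 6 * Δ + 2 * c / δ) * Y * L := by
  have hX₀ : 0 < X := one_pos.trans_le hX
  have hY₀ : 0 < Y := hX₀.trans_le hXY
  have hYL : Y ≤ Y * L := le_mul_of_one_le_right hY₀.le hL
  have hexplore : 5 * (2 * (a * L * N) + 1) * N ≤ 50 * (Y * L) := by
    calc 5 * (2 * (a * L * N) + 1) * N ≤ 5 * (2 * (a * L * (2 * X)) + 1) * (2 * X) := by gcongr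
      _ = 40 * (a * X ^ 2 * L) + 10 * X := by ring
      _ ≤ 40 * (Y * L) + 10 * (Y * L) := by rw [hY]; gcongr; exact hXY.trans hYL
      _ = 50 * (Y * L) := by ring
  have hround : 6 * Δ * t / N ≤ 6 * Δ * (Y * L) := by
    calc 6 * Δ * t / N ≤ 6 * Δ * t / X := by gcongr; rw [← ht]; positivity
      _ = 6 * Δ * Y := by rw [← ht]; field_simp
      _ ≤ 6 * Δ * (Y * L) := by gcongr
  have hrefuse : c * a * N / δ ≤ 2 * c / δ * (Y * L) := by
    calc c * a * N / δ ≤ c * a * (2 * X ^ 2) / δ := by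
          gcongr
          exact hNX.trans (by nlinarith)
      _ = 2 * c / δ * Y := by rw [← hY]; ring
      _ ≤ 2 * c / δ * (Y * L) := by gcongr
  linarith

theorem balanced_rpow {α t : ℝ} (hα : α ∈ Icc (-1 / 2) 1) (ht : 1 ≤ t) :
    1 ≤ t ^ ((1 - α) / 3) ∧ t ^ ((1 - α) / 3) ≤ t ^ ((2 + α) / 3) ∧
      t ^ α * (t ^ ((1 - α) / 3)) ^ 2 = t ^ ((2 + α) / 3) ∧
      t ^ ((2 + α) / 3) * t ^ ((1 - α) / 3) = t := by
  have ht₀ : 0 < t := one_pos.trans_le ht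
  refine ⟨Real.one_le_rpow ht (by linarith [hα.2]),
    Real.rpow_le_rpow_of_exponent_le ht (by linarith [hα.1]), ?_, ?_⟩
  · rw [← Real.rpow_mul_natCast ht₀.le, ← Real.rpow_add ht₀]
    congr 1
    push_cast
    ring
  · rw [← Real.rpow_add ht₀, show (2 + α) / 3 + (1 - α) / 3 = 1 by ring, Real.rpow_one]

theorem aliceRegret_searchStrategy_balanced_le {δ Δ α c : ℝ} {L : ℕ → ℝ} {vA vB : ℝ → ℝ} {T : ℕ}
    (hδ : 0 < δ) (hα : α ∈ Icc (-1 / 2) 1) (hc : 0 ≤ c) (hT : 1 ≤ T) (hL : 1 ≤ L T)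
    (hcL : c ≤ δ * L T) (hA : IsValueDensity δ Δ vA) (hB : IsValueDensity δ Δ vB)
    (SB : BobStrategy 2)
    (hR : bobRegret 2 vB (searchStrategy vA (searchMesh α) (searchPatience α L)) SB T ≤
      c * (T : ℝ) ^ α) :
    aliceRegret 2 vA vB (searchStrategy vA (searchMesh α) (searchPatience α L)) SB T ≤
      (50 + 6 * Δ + 2 * c / δ) * (T : ℝ) ^ ((2 + α) / 3) * L T := by
  obtain ⟨hX, hXY, hY, ht⟩ := balanced_rpow hα (Nat.one_le_cast.mpr hT)
  set X := (T : ℝ) ^ ((1 - α) / 3)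
  obtain ⟨N, hN⟩ : ∃ N, N = ⌊X⌋₊ + 1 := ⟨_, rfl⟩
  have hXN : X < N := by
    rw [hN, Nat.cast_add_one]
    exact Nat.lt_floor_add_one X
  have hNX : N ≤ 2 * X := by
    rw [hN, Nat.cast_add_one]
    linarith [Nat.floor_le (zero_le_one.trans hX)]
  have hN₁ : 1 < N := Nat.one_lt_cast.mp (hX.trans_lt hXN)
  have hmesh : searchMesh α T = (N : ℝ)⁻¹ := by rw [hN, searchMesh]
  have hpatience : searchPatience α L T = (T : ℝ) ^ α * L T * N := by
    rw [searchPatience, hmesh, div_inv_eq_mul]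
  have hbudget : c * (T : ℝ) ^ α * N ≤ searchPatience α L T * δ := by
    calc c * (T : ℝ) ^ α * N ≤ δ * L T * (T : ℝ) ^ α * N := by gcongr
      _ = searchPatience α L T * δ := by rw [hpatience]; ring
  refine (aliceRegret_searchStrategy_le hδ hN₁ hmesh (by rw [hpatience]; positivity) hA hB SB hR
    hbudget).trans ?_
  rw [hpatience]
  exact balanced_regret_le hδ (hδ.le.trans hA.lower_le_upper) hc (by positivity) hL hX hXY hY ht
    hXN.le hNX

theorem two_cut_public_rate_upper_general {δ Δ α : ℝ} (hδ : 0 < δ) (hα : α ∈ Icc (-1 / 2) 1)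
    {L : ℕ → ℝ} (hL : Filter.Tendsto L Filter.atTop Filter.atTop) {vA : ℝ → ℝ}
    (hA : IsValueDensity δ Δ vA) :
    ∃ SA : AliceStrategy 2, AliceValid 2 SA ∧ ∀ c : ℝ, 0 < c →
      ∃ (C : ℝ) (T₀ : ℕ), 0 < C ∧ ∀ vB : ℝ → ℝ, IsValueDensity δ Δ vB →
        ∀ (SB : BobStrategy 2) (T : ℕ), T₀ ≤ T → bobRegret 2 vB SA SB T ≤ c * (T : ℝ) ^ α →
          aliceRegret 2 vA vB SA SB T ≤ C * (T : ℝ) ^ ((2 + α) / 3) * L T := by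
  refine ⟨searchStrategy vA (searchMesh α) (searchPatience α L),
    aliceValid_searchStrategy _ _ _, fun c hc ↦ ?_⟩
  have hΔ : 0 < Δ := hδ.trans_le hA.lower_le_upper
  obtain ⟨T₀, hT₀⟩ := Filter.eventually_atTop.mp
    ((Filter.eventually_ge_atTop 1).and (hL.eventually_ge_atTop (max 1 (c / δ))))
  refine ⟨50 + 6 * Δ + 2 * c / δ, T₀, by positivity, fun vB hB SB T hT hR ↦ ?_⟩
  obtain ⟨hT₁, hLT⟩ := hT₀ T hT
  exact aliceRegret_searchStrategy_balanced_le hδ hα hc.le hT₁ ((le_max_left _ _).trans hLT)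
    ((div_le_iff₀' hδ).mp ((le_max_right _ _).trans hLT)) hA hB SB hR

theorem tendsto_natCast_log_rpow_atTop {r : ℝ} (hr : 0 < r) :
    Filter.Tendsto (fun T : ℕ ↦ Real.log T ^ r) Filter.atTop Filter.atTop :=
  (tendsto_rpow_atTop hr).comp (Real.tendsto_log_atTop.comp tendsto_natCast_atTop_atTop)

/-- 2 cuts, non-myopic Bob with public learning rate, upper bound:
for `α ∈ (-1/2, 1)`, for every Alice value density there is a deterministic Alice strategy
(depending on `α` but not on `c`) such that for every `c > 0` there are `C > 0` and `T₀`
with: against every Bob value density and every Bob strategy guaranteeing regret at most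
`c·T'^α` for all horizons, Alice's Stackelberg regret over any horizon `T ≥ T₀` is at most
`C·T^{(2+α)/3}·(log T)^{2/3}`. -/
theorem two_cut_public_rate_upper (δ Δ : ℝ) (hδ : 0 < δ) (hδΔ : δ ≤ Δ)
    (α : ℝ) (hα₁ : -(1/2 : ℝ) < α) (hα₂ : α < 1) :
    ∀ vA : ℝ → ℝ, IsValueDensity δ Δ vA →
      ∃ SA : AliceStrategy 2, AliceValid 2 SA ∧
        ∀ c : ℝ, 0 < c →
          ∃ (C : ℝ) (T₀ : ℕ), 0 < C ∧
            ∀ vB : ℝ → ℝ, IsValueDensity δ Δ vB →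
              ∀ SB : BobStrategy 2,
                BobGuarantees 2 vB SB (fun T' => c * (T' : ℝ) ^ α) →
                ∀ T : ℕ, T₀ ≤ T →
                  aliceRegret 2 vA vB SA SB T ≤
                    C * (T : ℝ) ^ ((2 + α) / 3) * Real.log T ^ ((2 : ℝ) / 3) := by
  intro vA hA
  obtain ⟨SA, hSA, hregret⟩ := two_cut_public_rate_upper_general hδ ⟨by linarith, hα₂.le⟩
    (tendsto_natCast_log_rpow_atTop (r := 2 / 3) (by norm_num)) hA
  refine ⟨SA, hSA, fun c hc ↦ ?_⟩
  obtain ⟨C, T₀, hC, hbound⟩ := hregret c hc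
  exact ⟨C, T₀, hC, fun vB hB SB hSB T hT ↦ hbound vB hB SB T hT (hSB SA T)⟩

end
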